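/- Let μ ∈ C²(ℝ³) be spherically symmetric, μ(x) = u(|x|), with u′(r) > 0 for all r > 0. Define E(x,v) := e^{μ(x)} √(1+|v|²) for (x,v) ∈ ℝ³ × ℝ³, fix E⁰ > e^{μ(0)}, and assume that the set D := {(x,v) : E(x,v) < E⁰} is bounded. Let χ : (e^{μ(0)}, E⁰) → (0,∞) be continuous and let g, h be C¹ functions on D. If the functions {g,E} h χ(E) and {h,E} g χ(E) are Lebesgue integrable over D, then ∫∫_D {g,E} h χ(E) dv dx = − ∫∫_D {h,E} g χ(E) dv dx. In particular, this integration-by-parts formula holds without any boundary conditions on g, h, or the weight χ. -/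

import Mathlib

open MeasureTheory
open scoped RealInnerProductSpace

noncomputable section

/-- Gradient in the `x` (position) variable of a function on phase space `ℝ³ × ℝ³`. -/
def gradX (f : EuclideanSpace ℝ (Fin 3) × EuclideanSpace ℝ (Fin 3) → ℝ)
    (p : EuclideanSpace ℝ (Fin 3) × EuclideanSpace ℝ (Fin 3)) : EuclideanSpace ℝ (Fin 3) :=
  gradient (fun x => f (x, p.2)) p.1

/-- Gradient in the `v` (momentum) variable of a function on phase space `ℝ³ × ℝ³`. -/
def gradV (f : EuclideanSpace ℝ (Fin 3) × EuclideanSpace ℝ (Fin 3) → ℝ)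
    (p : EuclideanSpace ℝ (Fin 3) × EuclideanSpace ℝ (Fin 3)) : EuclideanSpace ℝ (Fin 3) :=
  gradient (fun v => f (p.1, v)) p.2

/-- The Poisson bracket `{f, g} = ∇ₓf · ∇ᵥg − ∇ᵥf · ∇ₓg` on phase space `ℝ³ × ℝ³`. -/
def poissonBracket (f g : EuclideanSpace ℝ (Fin 3) × EuclideanSpace ℝ (Fin 3) → ℝ)
    (p : EuclideanSpace ℝ (Fin 3) × EuclideanSpace ℝ (Fin 3)) : ℝ :=
  ⟪gradX f p, gradV g p⟫ - ⟪gradV f p, gradX g p⟫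

open Set Filter Topology InnerProductSpace

/-!
`{f, E}` is the derivative of `f` along the Hamiltonian field of `E`. This field is tangent to the
level sets of `E`, and it is divergence-free because second derivatives commute. Testing
divergence-freeness against `f ψ(E)`, with `ψ` a smooth cutoff below `E⁰`, differentiates only `f`;
letting `ψ` tend to the indicator of `(-∞, t]` shows that `{f, E}` has integral zero over every
sublevel set `{E ≤ t}`, `t < E⁰`. Hence the conditional expectation of `{f, E}` given the value of
`E` vanishes, and `{f, E}` is orthogonal to every measurable weight `χ(E)`, whatever its behaviour
near `E⁰`. The integration by parts is the case `f = g h`. The minimal energy, where `χ` is not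
controlled, does not matter: there `dE = 0` and both integrands vanish.
-/

section CondExp

variable {α β : Type*} [MeasurableSpace α] [MeasurableSpace β] {μ : Measure α} {E : α → β}
  {f : α → ℝ}

lemma setIntegral_preimage_eq_zero_of_Iic [LinearOrder β] [TopologicalSpace β] [OrderTopology β]
    [SecondCountableTopology β] [BorelSpace β] (hE : Measurable E) (hf : Integrable f μ)
    (hfμ : ∫ p, f p ∂μ = 0) (hIic : ∀ t, ∫ p in E ⁻¹' Iic t, f p ∂μ = 0) {S : Set β}
    (hS : MeasurableSet S) : ∫ p in E ⁻¹' S, f p ∂μ = 0 := by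
  have hmap : ∀ {T : Set β}, MeasurableSet T →
      (μ.withDensityᵥ f).map E T = ∫ p in E ⁻¹' T, f p ∂μ := fun hT => by
    rw [VectorMeasure.map_apply _ hE hT, withDensityᵥ_apply hf (hE hT)]
  have hzero : (μ.withDensityᵥ f).map E = 0 := by
    refine VectorMeasure.ext_of_generateFrom (range Iic) ?_
      (BorelSpace.measurable_eq.trans (borel_eq_generateFrom_Iic β)) isPiSystem_Iic ?_
    · rintro _ ⟨t, rfl⟩
      simpa only [hmap measurableSet_Iic, zero_apply] using hIic t
    · simpa only [hmap MeasurableSet.univ, preimage_univ, setIntegral_univ, zero_apply] using hfμ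
  rw [← hmap hS, hzero, zero_apply]

lemma condExp_comap_ae_eq_zero [IsFiniteMeasure μ] (hE : Measurable E) (hf : Integrable f μ)
    (hfE : ∀ S, MeasurableSet S → ∫ p in E ⁻¹' S, f p ∂μ = 0) :
    μ[f | MeasurableSpace.comap E inferInstance] =ᵐ[μ] 0 := by
  refine (ae_eq_condExp_of_forall_setIntegral_eq hE.comap_le hf
    (fun _ _ _ => integrableOn_zero) ?_ aestronglyMeasurable_zero).symm
  rintro _ ⟨S, hS, rfl⟩ -
  simpa using (hfE S hS).symm

lemma integral_mul_comp_eq_zero_of_condExp_comap [IsFiniteMeasure μ] (hE : Measurable E)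
    (hf : Integrable f μ) (hfE : μ[f | MeasurableSpace.comap E inferInstance] =ᵐ[μ] 0)
    {χ : β → ℝ} (hχ : Measurable χ) (hint : Integrable (fun p => f p * χ (E p)) μ) :
    ∫ p, f p * χ (E p) ∂μ = 0 := by
  have hpull : μ[fun p => f p * χ (E p) | MeasurableSpace.comap E inferInstance] =ᵐ[μ] 0 := by
    refine (condExp_mul_of_stronglyMeasurable_right
      (hχ.comp (comap_measurable E)).stronglyMeasurable hint hf).trans ?_
    filter_upwards [hfE] with p hp
    simp [hp]
  rw [← integral_condExp hE.comap_le, integral_congr_ae hpull, Pi.zero_def, integral_zero]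

end CondExp

lemma exists_contDiff_tendsto_indicator_Iic {t b : ℝ} (htb : t < b) :
    ∃ ψ : ℕ → ℝ → ℝ, (∀ n, ContDiff ℝ 1 (ψ n)) ∧ (∀ n s, ψ n s ∈ Icc 0 1) ∧
      (∀ n s, b < s → ψ n s = 0) ∧
      ∀ s, Tendsto (fun n => ψ n s) atTop (𝓝 ((Iic t).indicator 1 s)) := by
  have hbt : 0 < b - t := sub_pos.2 htb
  refine ⟨fun n s => Real.smoothTransition (1 - (n + 1) * ((s - t) / (b - t))),
    fun n => Real.smoothTransition.contDiff.comp (by fun_prop),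
    fun n s => ⟨Real.smoothTransition.nonneg _, Real.smoothTransition.le_one _⟩,
    fun n s hs => Real.smoothTransition.zero_of_nonpos ?_,
    fun s => tendsto_const_nhds.congr' ?_⟩
  · have hratio : 1 ≤ (s - t) / (b - t) := (one_le_div hbt).2 (by linarith)
    nlinarith [n.cast_nonneg (α := ℝ)]
  rcases le_or_gt s t with hs | hs
  · rw [indicator_of_mem (mem_Iic.2 hs)]
    refine .of_forall fun n => (Real.smoothTransition.one_of_one_le ?_).symm
    have hratio : (s - t) / (b - t) ≤ 0 := div_nonpos_of_nonpos_of_nonneg (by linarith) hbt.le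
    linarith [mul_nonpos_of_nonneg_of_nonpos (n.cast_add_one_pos (α := ℝ)).le hratio]
  · rw [indicator_of_notMem (notMem_Iic.2 hs)]
    filter_upwards [eventually_ge_atTop ⌈((s - t) / (b - t))⁻¹⌉₊] with n hn
    refine (Real.smoothTransition.zero_of_nonpos ?_).symm
    have hratio : 0 < (s - t) / (b - t) := div_pos (sub_pos.2 hs) hbt
    linarith [(inv_le_iff_one_le_mul₀ hratio).1 (Nat.ceil_le.1 hn)]

lemma tsupport_mul_comp_subset {W : Type*} [TopologicalSpace W] {E f : W → ℝ} {b : ℝ}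
    (hE : Continuous E) {ψ : ℝ → ℝ} (hψ : ∀ s, b < s → ψ s = 0) :
    tsupport (fun p => f p * ψ (E p)) ⊆ {p | E p ≤ b} := by
  refine closure_minimal (fun p hp => ?_) (isClosed_le hE continuous_const)
  contrapose! hp
  simp [hψ _ (not_le.1 hp)]

section DivergenceFree

variable {W : Type*} [NormedAddCommGroup W] [NormedSpace ℝ W] {E f : W → ℝ} {b E0 : ℝ}

lemma fderiv_mul_comp_apply {p w : W} {ψ : ℝ → ℝ} (hf : DifferentiableAt ℝ f p)
    (hψ : DifferentiableAt ℝ ψ (E p)) (hE : DifferentiableAt ℝ E p) (hw : fderiv ℝ E p w = 0) :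
    fderiv ℝ (fun q => f q * ψ (E q)) p w = fderiv ℝ f p w * ψ (E p) := by
  have hψE : HasFDerivAt (fun q => ψ (E q)) (deriv ψ (E p) • fderiv ℝ E p) p :=
    hψ.hasDerivAt.comp_hasFDerivAt p hE.hasFDerivAt
  rw [fderiv_fun_mul hf hψE.differentiableAt, hψE.fderiv]
  simp [hw, mul_comm]

lemma continuousOn_fderiv_apply {X : W → W} (hX : Continuous X) {D : Set W} (hD : IsOpen D)
    (hf : ContDiffOn ℝ 1 f D) : ContinuousOn (fun p => fderiv ℝ f p (X p)) D :=
  (hf.continuousOn_fderiv_of_isOpen hD le_rfl).clm_apply hX.continuousOn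

variable [MeasurableSpace W] {X : W → W} {ν : Measure W}

/-- A vector field `X` is weakly divergence-free with respect to `ν` if the derivative along `X` of
every `C¹` function with compact support has integral zero; for a `C¹` field and Lebesgue measure
this is `div X = 0`. Meant for locally `ν`-integrable `X`: otherwise the integral may be a junk
zero. -/
def IsWeaklyDivergenceFree (X : W → W) (ν : Measure W) : Prop :=
  ∀ F : W → ℝ, ContDiff ℝ 1 F → HasCompactSupport F → ∫ p, fderiv ℝ F p (X p) ∂ν = 0

variable [BorelSpace W]

lemma IsWeaklyDivergenceFree.setIntegral_fderiv_mul_comp_sublevel_eq_zero_of_contDiff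
    (hX : IsWeaklyDivergenceFree X ν) (hE : ContDiff ℝ 1 E) (hEX : ∀ p, fderiv ℝ E p (X p) = 0)
    (hb : b < E0) (hK : IsCompact {p | E p ≤ b}) (hf : ContDiffOn ℝ 1 f {p | E p < E0})
    {ψ : ℝ → ℝ} (hψ : ContDiff ℝ 1 ψ) (hψb : ∀ s, b < s → ψ s = 0) :
    ∫ p in {p | E p ≤ b}, fderiv ℝ f p (X p) * ψ (E p) ∂ν = 0 := by
  have hnhds : ∀ p, E p ≤ b → {p | E p < E0} ∈ 𝓝 p := fun p hp =>
    (isOpen_lt hE.continuous continuous_const).mem_nhds (lt_of_le_of_lt hp hb)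
  have hsupp : tsupport (fun p => f p * ψ (E p)) ⊆ {p | E p ≤ b} :=
    tsupport_mul_comp_subset hE.continuous hψb
  have hF : ContDiff ℝ 1 fun p => f p * ψ (E p) :=
    (contMDiff_of_tsupport fun p hp =>
      ((hf.contDiffAt (hnhds p (hsupp hp))).mul (hψ.comp hE).contDiffAt).contMDiffAt).contDiff
  calc ∫ p in {p | E p ≤ b}, fderiv ℝ f p (X p) * ψ (E p) ∂ν
      = ∫ p in {p | E p ≤ b}, fderiv ℝ (fun q => f q * ψ (E q)) p (X p) ∂ν :=
        setIntegral_congr_fun hK.measurableSet fun p hp =>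
          (fderiv_mul_comp_apply ((hf.differentiableOn one_ne_zero).differentiableAt (hnhds p hp))
            (hψ.differentiable one_ne_zero _) (hE.differentiable one_ne_zero p) (hEX p)).symm
    _ = ∫ p, fderiv ℝ (fun q => f q * ψ (E q)) p (X p) ∂ν :=
        setIntegral_eq_integral_of_forall_compl_eq_zero fun p hp => by
          rw [fderiv_of_notMem_tsupport ℝ fun hp' => hp (hsupp hp'), zero_apply]
    _ = 0 := hX _ hF (hK.of_isClosed_subset (isClosed_tsupport _) hsupp)

variable [IsFiniteMeasureOnCompacts ν]

lemma integrableOn_fderiv_apply_sublevel (hXc : Continuous X) (hE : Continuous E)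
    (hb : b < E0) (hK : IsCompact {p | E p ≤ b}) (hf : ContDiffOn ℝ 1 f {p | E p < E0}) :
    IntegrableOn (fun p => fderiv ℝ f p (X p)) {p | E p ≤ b} ν :=
  ((continuousOn_fderiv_apply hXc (isOpen_lt hE continuous_const) hf).mono
    fun _ hp => lt_of_le_of_lt hp hb).integrableOn_compact hK

lemma IsWeaklyDivergenceFree.setIntegral_fderiv_sublevel_eq_zero
    (hX : IsWeaklyDivergenceFree X ν) (hXc : Continuous X) (hE : ContDiff ℝ 1 E)
    (hEX : ∀ p, fderiv ℝ E p (X p) = 0) (hK : ∀ b < E0, IsCompact {p | E p ≤ b})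
    (hf : ContDiffOn ℝ 1 f {p | E p < E0}) {t : ℝ} (ht : t < E0) :
    ∫ p in {p | E p ≤ t}, fderiv ℝ f p (X p) ∂ν = 0 := by
  obtain ⟨b, htb, hb⟩ := exists_between ht
  obtain ⟨ψ, hψ, hψ01, hψb, hψlim⟩ := exists_contDiff_tendsto_indicator_Iic htb
  have hmeas : ∀ c, MeasurableSet {p | E p ≤ c} := fun c =>
    (isClosed_le hE.continuous continuous_const).measurableSet
  have hint : IntegrableOn (fun p => fderiv ℝ f p (X p)) {p | E p ≤ b} ν :=
    integrableOn_fderiv_apply_sublevel hXc hE.continuous hb (hK b hb) hf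
  have hlim : Tendsto (fun n => ∫ p in {p | E p ≤ b}, fderiv ℝ f p (X p) * ψ n (E p) ∂ν) atTop
      (𝓝 (∫ p in {p | E p ≤ b}, {p | E p ≤ t}.indicator (fun p => fderiv ℝ f p (X p)) p ∂ν)) := by
    refine tendsto_integral_of_dominated_convergence (fun p => ‖fderiv ℝ f p (X p)‖)
      (fun n => hint.aestronglyMeasurable.mul
        ((hψ n).continuous.comp hE.continuous).aestronglyMeasurable) hint.norm
      (fun n => .of_forall fun p => ?_) (.of_forall fun p => ?_)
    · rw [norm_mul, Real.norm_of_nonneg (hψ01 n _).1]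
      exact mul_le_of_le_one_right (norm_nonneg _) (hψ01 n _).2
    · convert (hψlim (E p)).const_mul (fderiv ℝ f p (X p)) using 2
      simp [indicator_apply]
  have hzero : ∀ n, ∫ p in {p | E p ≤ b}, fderiv ℝ f p (X p) * ψ n (E p) ∂ν = 0 := fun n =>
    hX.setIntegral_fderiv_mul_comp_sublevel_eq_zero_of_contDiff hE hEX hb (hK b hb) hf
      (hψ n) (hψb n)
  have hinter : {p | E p ≤ b} ∩ {p | E p ≤ t} = {p | E p ≤ t} :=
    inter_eq_right.2 fun _ (hp : E _ ≤ t) => hp.trans htb.le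
  simp only [hzero, setIntegral_indicator (hmeas t), hinter] at hlim
  exact tendsto_nhds_unique hlim tendsto_const_nhds

lemma IsWeaklyDivergenceFree.setIntegral_fderiv_mul_comp_sublevel_eq_zero
    (hX : IsWeaklyDivergenceFree X ν) (hXc : Continuous X) (hE : ContDiff ℝ 1 E)
    (hEX : ∀ p, fderiv ℝ E p (X p) = 0) (hK : ∀ b < E0, IsCompact {p | E p ≤ b})
    (hf : ContDiffOn ℝ 1 f {p | E p < E0}) {χ : ℝ → ℝ} (hχ : Measurable χ) (hb : b < E0)
    (hint : IntegrableOn (fun p => fderiv ℝ f p (X p) * χ (E p)) {p | E p ≤ b} ν) :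
    ∫ p in {p | E p ≤ b}, fderiv ℝ f p (X p) * χ (E p) ∂ν = 0 := by
  have hEm : Measurable E := hE.continuous.measurable
  have hfin : IsFiniteMeasure (ν.restrict {p | E p ≤ b}) :=
    isFiniteMeasure_restrict.2 (hK b hb).measure_lt_top.ne
  have hsub : ∀ t < E0, ∫ p in {p | E p ≤ t}, fderiv ℝ f p (X p) ∂ν = 0 := fun t =>
    hX.setIntegral_fderiv_sublevel_eq_zero hXc hE hEX hK hf
  have hIic : ∀ t, ∫ p in E ⁻¹' Iic t, fderiv ℝ f p (X p) ∂ν.restrict {p | E p ≤ b} = 0 := by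
    intro t
    have hinter : E ⁻¹' Iic t ∩ {p | E p ≤ b} = {p | E p ≤ min t b} := by ext; simp
    rw [Measure.restrict_restrict (hEm measurableSet_Iic), hinter]
    exact hsub _ (min_lt_of_right_lt hb)
  have hfb := integrableOn_fderiv_apply_sublevel (ν := ν) hXc hE.continuous hb (hK b hb) hf
  exact integral_mul_comp_eq_zero_of_condExp_comap hEm hfb (condExp_comap_ae_eq_zero hEm hfb
    fun _ hS => setIntegral_preimage_eq_zero_of_Iic hEm hfb (hsub b hb) hIic hS) hχ hint

lemma IsWeaklyDivergenceFree.setIntegral_fderiv_mul_comp_eq_zero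
    (hX : IsWeaklyDivergenceFree X ν) (hXc : Continuous X) (hE : ContDiff ℝ 1 E)
    (hEX : ∀ p, fderiv ℝ E p (X p) = 0) (hK : ∀ b < E0, IsCompact {p | E p ≤ b})
    (hf : ContDiffOn ℝ 1 f {p | E p < E0}) {χ : ℝ → ℝ} (hχ : Measurable χ)
    (hint : IntegrableOn (fun p => fderiv ℝ f p (X p) * χ (E p)) {p | E p < E0} ν) :
    ∫ p in {p | E p < E0}, fderiv ℝ f p (X p) * χ (E p) ∂ν = 0 := by
  obtain ⟨u, hu, huE0, hulim⟩ := exists_seq_strictMono_tendsto E0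
  have hunion : ⋃ n, {p | E p ≤ u n} = {p | E p < E0} :=
    preimage_iUnion.symm.trans
      (congrArg (E ⁻¹' ·) (iUnion_Iic_eq_Iio_of_lt_of_tendsto huE0 hulim))
  have hsub : ∀ n, {p | E p ≤ u n} ⊆ {p | E p < E0} := fun n p hp => lt_of_le_of_lt hp (huE0 n)
  have hlim := tendsto_setIntegral_of_monotone
    (fun n => (isClosed_le hE.continuous continuous_const).measurableSet)
    (fun m n hmn p (hp : E p ≤ u m) => hp.trans (hu.monotone hmn)) (hunion.symm ▸ hint)
  simp only [hX.setIntegral_fderiv_mul_comp_sublevel_eq_zero hXc hE hEX hK hf hχ (huE0 _)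
    (hint.mono_set (hsub _)), hunion] at hlim
  exact tendsto_nhds_unique hlim tendsto_const_nhds

theorem IsWeaklyDivergenceFree.setIntegral_fderiv_mul_mul_comp_eq_neg
    (hX : IsWeaklyDivergenceFree X ν) (hXc : Continuous X) (hE : ContDiff ℝ 1 E)
    (hEX : ∀ p, fderiv ℝ E p (X p) = 0) (hK : ∀ b < E0, IsCompact {p | E p ≤ b})
    {χ : ℝ → ℝ} (hχ : Measurable χ) {g h : W → ℝ} (hg : ContDiffOn ℝ 1 g {p | E p < E0})
    (hh : ContDiffOn ℝ 1 h {p | E p < E0})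
    (hgint : IntegrableOn (fun p => fderiv ℝ g p (X p) * h p * χ (E p)) {p | E p < E0} ν)
    (hhint : IntegrableOn (fun p => fderiv ℝ h p (X p) * g p * χ (E p)) {p | E p < E0} ν) :
    ∫ p in {p | E p < E0}, fderiv ℝ g p (X p) * h p * χ (E p) ∂ν =
      - ∫ p in {p | E p < E0}, fderiv ℝ h p (X p) * g p * χ (E p) ∂ν := by
  have hopen : IsOpen {p | E p < E0} := isOpen_lt hE.continuous continuous_const
  have hleibniz : EqOn (fun p => fderiv ℝ (fun q => g q * h q) p (X p) * χ (E p))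
      (fun p => fderiv ℝ g p (X p) * h p * χ (E p) + fderiv ℝ h p (X p) * g p * χ (E p))
      {p | E p < E0} := fun p hp => by
    have hp' := hopen.mem_nhds hp
    beta_reduce
    rw [fderiv_fun_mul ((hg.differentiableOn one_ne_zero).differentiableAt hp')
      ((hh.differentiableOn one_ne_zero).differentiableAt hp')]
    simp only [add_apply, FunLike.coe_smul, Pi.smul_apply, smul_eq_mul]
    ring
  have hzero := hX.setIntegral_fderiv_mul_comp_eq_zero hXc hE hEX hK (hg.mul hh) hχ
    ((integrableOn_congr_fun hleibniz hopen.measurableSet).2 (hgint.add hhint))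
  rw [setIntegral_congr_fun hopen.measurableSet hleibniz, integral_add hgint hhint] at hzero
  exact eq_neg_of_add_eq_zero_left hzero

end DivergenceFree

section MixedDerivatives

variable {W : Type*} [NormedAddCommGroup W] [NormedSpace ℝ W] [MeasurableSpace W] [BorelSpace W]
  {ν : Measure W} {F E : W → ℝ}

lemma integrable_fderiv_mul_fderiv_of_hasCompactSupport [IsFiniteMeasureOnCompacts ν]
    (hF : ContDiff ℝ 1 F) (hFc : HasCompactSupport F) (hE : ContDiff ℝ 1 E) (a b : W) :
    Integrable (fun p => fderiv ℝ F p a * fderiv ℝ E p b) ν :=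
  (((hF.continuous_fderiv one_ne_zero).clm_apply continuous_const).mul
    ((hE.continuous_fderiv one_ne_zero).clm_apply
      continuous_const)).integrable_of_hasCompactSupport (hFc.fderiv_apply ℝ a).mul_right

variable [FiniteDimensional ℝ W] [ν.IsAddHaarMeasure]

lemma integral_fderiv_mul_fderiv_eq_neg (hF : ContDiff ℝ 1 F) (hFc : HasCompactSupport F)
    (hE : ContDiff ℝ 2 E) (a b : W) :
    ∫ p, fderiv ℝ F p a * fderiv ℝ E p b ∂ν =
      - ∫ p, F p * fderiv ℝ (fderiv ℝ E) p a b ∂ν := by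
  have hE' : ContDiff ℝ 1 (fderiv ℝ E) := hE.fderiv_right (by norm_num)
  have hEb : ContDiff ℝ 1 fun p => fderiv ℝ E p b := hE'.clm_apply contDiff_const
  have hEab : ∀ p, fderiv ℝ (fun q => fderiv ℝ E q b) p a = fderiv ℝ (fderiv ℝ E) p a b := by
    intro p
    rw [fderiv_clm_apply (hE'.differentiable one_ne_zero p) (differentiableAt_const _)]
    simp
  simp only [← hEab]
  rw [integral_mul_fderiv_eq_neg_fderiv_mul_of_integrable (f := F), neg_neg]
  · exact integrable_fderiv_mul_fderiv_of_hasCompactSupport hF hFc (hE.of_le one_le_two) a b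
  · exact (hF.continuous.mul ((hEb.continuous_fderiv one_ne_zero).clm_apply
      continuous_const)).integrable_of_hasCompactSupport hFc.mul_right
  · exact (hF.continuous.mul hEb.continuous).integrable_of_hasCompactSupport hFc.mul_right
  · exact fun p _ => hF.differentiable one_ne_zero p
  · exact fun p _ => hEb.differentiable one_ne_zero p

lemma integral_fderiv_mul_fderiv_comm (hF : ContDiff ℝ 1 F) (hFc : HasCompactSupport F)
    (hE : ContDiff ℝ 2 E) (a b : W) :
    ∫ p, fderiv ℝ F p a * fderiv ℝ E p b ∂ν = ∫ p, fderiv ℝ F p b * fderiv ℝ E p a ∂ν := by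
  have hsymm : ∀ p, fderiv ℝ (fderiv ℝ E) p a b = fderiv ℝ (fderiv ℝ E) p b a := fun p =>
    (hE.contDiffAt.isSymmSndFDerivAt (by simp) : IsSymmSndFDerivAt ℝ E p) a b
  simp only [integral_fderiv_mul_fderiv_eq_neg hF hFc hE, hsymm]

end MixedDerivatives

section PhaseSpace

variable {V : Type*} [NormedAddCommGroup V] [InnerProductSpace ℝ V] [CompleteSpace V]
  {f g E : V × V → ℝ} {p : V × V}

/-- The gradient in the first variable, the position gradient `gradX` on a general phase space. -/
def gradFst (f : V × V → ℝ) (p : V × V) : V := gradient (fun x => f (x, p.2)) p.1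

/-- The gradient in the second variable, the momentum gradient `gradV` on a general phase space. -/
def gradSnd (f : V × V → ℝ) (p : V × V) : V := gradient (fun v => f (p.1, v)) p.2

/-- The canonical Poisson bracket `∇ₓf · ∇ᵥg − ∇ᵥf · ∇ₓg` on the phase space `V × V`; for `V = ℝ³`
it unfolds to `poissonBracket`. -/
def canonicalBracket (f g : V × V → ℝ) (p : V × V) : ℝ :=
  ⟪gradFst f p, gradSnd g p⟫ - ⟪gradSnd f p, gradFst g p⟫

/-- The Hamiltonian vector field `(∇ᵥE, −∇ₓE)` of `E`, the direction in which `{·, E}`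
differentiates. -/
def hamiltonianField (E : V × V → ℝ) (p : V × V) : V × V := (gradSnd E p, -gradFst E p)

lemma gradFst_eq_toDual_symm (hf : DifferentiableAt ℝ f p) :
    gradFst f p = (toDual ℝ V).symm ((fderiv ℝ f p).comp (.inl ℝ V V)) :=
  congrArg (toDual ℝ V).symm
    (hf.hasFDerivAt.comp p.1 (hasFDerivAt_prodMk_left p.1 p.2)).fderiv

lemma gradSnd_eq_toDual_symm (hf : DifferentiableAt ℝ f p) :
    gradSnd f p = (toDual ℝ V).symm ((fderiv ℝ f p).comp (.inr ℝ V V)) :=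
  congrArg (toDual ℝ V).symm
    (hf.hasFDerivAt.comp p.2 (hasFDerivAt_prodMk_right p.1 p.2)).fderiv

lemma inner_gradFst_left (hf : DifferentiableAt ℝ f p) (w : V) :
    ⟪gradFst f p, w⟫ = fderiv ℝ f p (w, 0) := by
  rw [gradFst_eq_toDual_symm hf, toDual_symm_apply]
  rfl

lemma inner_gradSnd_left (hf : DifferentiableAt ℝ f p) (w : V) :
    ⟪gradSnd f p, w⟫ = fderiv ℝ f p (0, w) := by
  rw [gradSnd_eq_toDual_symm hf, toDual_symm_apply]
  rfl

lemma fderiv_hamiltonianField (hf : DifferentiableAt ℝ f p) :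
    fderiv ℝ f p (hamiltonianField E p) = canonicalBracket f E p := by
  rw [canonicalBracket, inner_gradFst_left hf, inner_gradSnd_left hf, ← map_sub, Prod.mk_sub_mk,
    sub_zero, zero_sub, hamiltonianField]

lemma canonicalBracket_self (f : V × V → ℝ) (p : V × V) : canonicalBracket f f p = 0 := by
  rw [canonicalBracket, real_inner_comm, sub_self]

lemma canonicalBracket_eq_zero_of_fderiv_eq_zero (hg : DifferentiableAt ℝ g p)
    (hg0 : fderiv ℝ g p = 0) : canonicalBracket f g p = 0 := by
  simp [canonicalBracket, gradFst_eq_toDual_symm hg, gradSnd_eq_toDual_symm hg, hg0]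

lemma continuous_hamiltonianField (hE : ContDiff ℝ 1 E) : Continuous (hamiltonianField E) := by
  have hdiff : ∀ p, DifferentiableAt ℝ E p := hE.differentiable one_ne_zero
  have hfield : hamiltonianField E = fun p => ((toDual ℝ V).symm ((fderiv ℝ E p).comp (.inr ℝ V V)),
      -(toDual ℝ V).symm ((fderiv ℝ E p).comp (.inl ℝ V V))) := funext fun p => by
    rw [hamiltonianField, gradFst_eq_toDual_symm (hdiff p), gradSnd_eq_toDual_symm (hdiff p)]
  have hpartial : ∀ j : V →L[ℝ] V × V, Continuous fun p => (toDual ℝ V).symm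
      ((fderiv ℝ E p).comp j) := fun j =>
    (toDual ℝ V).symm.continuous.comp ((hE.continuous_fderiv one_ne_zero).clm_comp continuous_const)
  exact hfield ▸ (hpartial _).prodMk (hpartial _).neg

lemma canonicalBracket_eq_sum {ι : Type*} [Fintype ι] (b : OrthonormalBasis ι ℝ V)
    (hf : DifferentiableAt ℝ f p) (hg : DifferentiableAt ℝ g p) :
    canonicalBracket f g p = ∑ i, (fderiv ℝ f p (b i, 0) * fderiv ℝ g p (0, b i) -
      fderiv ℝ f p (0, b i) * fderiv ℝ g p (b i, 0)) := by
  rw [canonicalBracket, ← b.sum_inner_mul_inner, ← b.sum_inner_mul_inner, ← Finset.sum_sub_distrib]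
  simp only [real_inner_comm (gradFst g p), real_inner_comm (gradSnd g p), inner_gradFst_left hf,
    inner_gradFst_left hg, inner_gradSnd_left hf, inner_gradSnd_left hg]

variable [FiniteDimensional ℝ V] [MeasurableSpace V] [BorelSpace V] {ν : Measure (V × V)}
  [ν.IsAddHaarMeasure]

theorem isWeaklyDivergenceFree_hamiltonianField (hE : ContDiff ℝ 2 E) :
    IsWeaklyDivergenceFree (hamiltonianField E) ν := by
  intro F hF hFc
  have hint : ∀ a b : V × V, Integrable (fun p => fderiv ℝ F p a * fderiv ℝ E p b) ν :=
    integrable_fderiv_mul_fderiv_of_hasCompactSupport hF hFc (hE.of_le one_le_two)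
  simp only [fderiv_hamiltonianField (hF.differentiable one_ne_zero _),
    canonicalBracket_eq_sum (stdOrthonormalBasis ℝ V) (hF.differentiable one_ne_zero _)
      (hE.differentiable two_ne_zero _)]
  rw [integral_finsetSum _ fun i _ => by exact (hint _ _).sub (hint _ _)]
  refine Finset.sum_eq_zero fun i _ => ?_
  rw [integral_sub (hint _ _) (hint _ _), integral_fderiv_mul_fderiv_comm hF hFc hE, sub_self]

theorem stmt3_general (hE : ContDiff ℝ 2 E) {a E0 : ℝ} (ha : ∀ p, a ≤ E p)
    (hK : ∀ b < E0, IsCompact {p | E p ≤ b}) {χ : ℝ → ℝ}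
    (hχ : Measurable ((Ioo a E0).indicator χ)) {g h : V × V → ℝ}
    (hg : ContDiffOn ℝ 1 g {p | E p < E0}) (hh : ContDiffOn ℝ 1 h {p | E p < E0})
    (hgint : IntegrableOn (fun p => canonicalBracket g E p * h p * χ (E p)) {p | E p < E0} ν)
    (hhint : IntegrableOn (fun p => canonicalBracket h E p * g p * χ (E p)) {p | E p < E0} ν) :
    ∫ p in {p | E p < E0}, canonicalBracket g E p * h p * χ (E p) ∂ν =
      - ∫ p in {p | E p < E0}, canonicalBracket h E p * g p * χ (E p) ∂ν := by
  have hopen : IsOpen {p | E p < E0} := isOpen_lt hE.continuous continuous_const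
  have hEd : ∀ p, DifferentiableAt ℝ E p := hE.differentiable two_ne_zero
  have hfield : ∀ {f k : V × V → ℝ}, ContDiffOn ℝ 1 f {p | E p < E0} →
      EqOn (fun p => canonicalBracket f E p * k p * χ (E p)) (fun p =>
        fderiv ℝ f p (hamiltonianField E p) * k p * (Ioo a E0).indicator χ (E p))
        {p | E p < E0} := fun {f k} hf p hp => by
    beta_reduce
    rw [fderiv_hamiltonianField ((hf.differentiableOn one_ne_zero).differentiableAt
      (hopen.mem_nhds hp))]
    rcases (ha p).eq_or_lt with hpa | hpa
    · have hcrit : fderiv ℝ E p = 0 :=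
        IsLocalMin.fderiv_eq_zero (.of_forall fun q => hpa ▸ ha q)
      simp [canonicalBracket_eq_zero_of_fderiv_eq_zero (hEd p) hcrit]
    · rw [indicator_of_mem (mem_Ioo.2 ⟨hpa, hp⟩)]
  rw [setIntegral_congr_fun hopen.measurableSet (hfield hg),
    setIntegral_congr_fun hopen.measurableSet (hfield hh)]
  exact (isWeaklyDivergenceFree_hamiltonianField hE).setIntegral_fderiv_mul_mul_comp_eq_neg
    (continuous_hamiltonianField (hE.of_le one_le_two)) (hE.of_le one_le_two)
    (fun p => (fderiv_hamiltonianField (hEd p)).trans (canonicalBracket_self E p)) hK hχ hg hh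
    ((integrableOn_congr_fun (hfield hg) hopen.measurableSet).1 hgint)
    ((integrableOn_congr_fun (hfield hh) hopen.measurableSet).1 hhint)

end PhaseSpace

section ParticleEnergy

lemma isCompact_setOf_le_of_isBounded_setOf_lt {W : Type*} [PseudoMetricSpace W] [ProperSpace W]
    {E : W → ℝ} {b E0 : ℝ} (hE : Continuous E) (hbdd : Bornology.IsBounded {p | E p < E0})
    (hb : b < E0) : IsCompact {p | E p ≤ b} :=
  Metric.isCompact_of_isClosed_isBounded (isClosed_le hE continuous_const)
    (hbdd.subset fun _ hp => lt_of_le_of_lt hp hb)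

lemma measurable_indicator_of_continuousOn {α : Type*} [TopologicalSpace α] [MeasurableSpace α]
    [OpensMeasurableSpace α] {β : Type*} [TopologicalSpace β] [MeasurableSpace β] [BorelSpace β]
    [Zero β] {f : α → β} {s : Set α} (hf : ContinuousOn f s) (hs : MeasurableSet s) :
    Measurable (s.indicator f) := by
  classical
  rw [← piecewise_eq_indicator]
  exact hf.measurable_piecewise continuousOn_const hs

lemma apply_zero_le_of_radial {V : Type*} [NormedAddCommGroup V] [NormedSpace ℝ V] {μ : V → ℝ}
    {u : ℝ → ℝ} (hμ : Continuous μ) (hμu : ∀ x, μ x = u ‖x‖)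
    (hu' : ∀ r : ℝ, 0 < r → 0 < deriv u r) (x : V) : μ 0 ≤ μ x := by
  rcases eq_or_ne x 0 with rfl | hx
  · exact le_rfl
  have hcont : ContinuousOn u (Ici 0) := by
    refine ContinuousOn.congr (f := fun r : ℝ => μ (r • ‖x‖⁻¹ • x)) (by fun_prop) fun r hr => ?_
    simp [hμu, norm_smul, abs_of_nonneg (mem_Ici.1 hr), hx]
  have hmono : MonotoneOn u (Ici 0) :=
    (strictMonoOn_of_deriv_pos (convex_Ici 0) hcont (by simpa using hu')).monotoneOn
  simpa [hμu] using hmono self_mem_Ici (norm_nonneg x) (norm_nonneg x)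

variable {V : Type*} [NormedAddCommGroup V] {μ : V → ℝ}

/-- The energy `e^{μ(x)} √(1 + |v|²)` of a particle at position `x` with momentum `v` in the
potential `μ`. -/
def particleEnergy (μ : V → ℝ) (p : V × V) : ℝ := Real.exp (μ p.1) * √(1 + ‖p.2‖ ^ 2)

lemma contDiff_particleEnergy [InnerProductSpace ℝ V] {n : WithTop ℕ∞} (hμ : ContDiff ℝ n μ) :
    ContDiff ℝ n (particleEnergy μ) :=
  (hμ.comp contDiff_fst).exp.mul
    ((contDiff_const.add (contDiff_snd.norm_sq ℝ)).sqrt fun p => by positivity)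

lemma exp_le_particleEnergy {c : ℝ} (hμ : ∀ x, c ≤ μ x) (p : V × V) :
    Real.exp c ≤ particleEnergy μ p :=
  (Real.exp_le_exp.2 (hμ p.1)).trans <| le_mul_of_one_le_right (Real.exp_pos _).le <|
    Real.one_le_sqrt.2 (le_add_of_nonneg_right (sq_nonneg _))

end ParticleEnergy

/-- Integration by parts for the Poisson bracket against the particle energy
`E(x,v) = e^{μ(x)} √(1+|v|²)` on the bounded region `D = {E < E⁰}`: for `g, h ∈ C¹(D)` and a
continuous positive weight `χ` one has
`∫∫_D {g,E} h χ(E) = − ∫∫_D {h,E} g χ(E)`, without boundary conditions on `g`, `h`, or `χ`. -/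
theorem stmt3
    (μ : EuclideanSpace ℝ (Fin 3) → ℝ) (u : ℝ → ℝ)
    (hμC2 : ContDiff ℝ 2 μ)
    (hμu : ∀ x : EuclideanSpace ℝ (Fin 3), μ x = u ‖x‖)
    (hu' : ∀ r : ℝ, 0 < r → 0 < deriv u r)
    (E0 : ℝ) (hE0 : Real.exp (μ 0) < E0)
    (E : EuclideanSpace ℝ (Fin 3) × EuclideanSpace ℝ (Fin 3) → ℝ)
    (hE : E = fun p => Real.exp (μ p.1) * Real.sqrt (1 + ‖p.2‖ ^ 2))
    (D : Set (EuclideanSpace ℝ (Fin 3) × EuclideanSpace ℝ (Fin 3)))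
    (hD : D = {p | E p < E0})
    (hDbdd : Bornology.IsBounded D)
    (χ : ℝ → ℝ)
    (hχcont : ContinuousOn χ (Set.Ioo (Real.exp (μ 0)) E0))
    (hχpos : ∀ s ∈ Set.Ioo (Real.exp (μ 0)) E0, 0 < χ s)
    (g h : EuclideanSpace ℝ (Fin 3) × EuclideanSpace ℝ (Fin 3) → ℝ)
    (hg : ContDiffOn ℝ 1 g D) (hh : ContDiffOn ℝ 1 h D)
    (hint1 : IntegrableOn (fun p => poissonBracket g E p * h p * χ (E p)) D)
    (hint2 : IntegrableOn (fun p => poissonBracket h E p * g p * χ (E p)) D) :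
    ∫ p in D, poissonBracket g E p * h p * χ (E p) =
      - ∫ p in D, poissonBracket h E p * g p * χ (E p) := by
  have hE2 : ContDiff ℝ 2 E := hE ▸ contDiff_particleEnergy hμC2
  have hEmin : ∀ p, Real.exp (μ 0) ≤ E p := hE ▸ exp_le_particleEnergy
    (apply_zero_le_of_radial hμC2.continuous hμu hu')
  subst hD
  exact stmt3_general (ν := Measure.prod volume volume) hE2 hEmin
    (fun _ => isCompact_setOf_le_of_isBounded_setOf_lt hE2.continuous hDbdd)
    (measurable_indicator_of_continuousOn hχcont measurableSet_Ioo) hg hh hint1 hint2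

end
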